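/- Let E be an elliptic curve with flat Kähler metric g₀, and E₀ = L_{q₁} ⊕ ⋯ ⊕ L_{q_n} with the q_i distinct, equipped with the flat diagonal Chern connection A₀ and trivial Hermitian metric H₀. Then there is a constant C_p > 0 such that for every trace-free Hermitian endomorphism s whose diagonal entries (in the trivial unitary frame) have zero average over E, one has ‖s‖_{L²(E)} ≤ C_p ‖∂̄_{A₀} s‖_{L²(E)}. -/

import Mathlib

open MeasureTheory
open scoped Matrix

/-- Partial derivative in the `y¹` direction of a complex function on `ℝ²`. -/
noncomputable def pdy1 (f : ℝ × ℝ → ℂ) (y : ℝ × ℝ) : ℂ :=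
  deriv (fun t => f (t, y.2)) y.1

/-- Partial derivative in the `y²` direction. -/
noncomputable def pdy2 (f : ℝ × ℝ → ℂ) (y : ℝ × ℝ) : ℂ :=
  deriv (fun t => f (y.1, t)) y.2

/-- The `∂/∂z̄` operator for the complex coordinate `z = τy¹ + y²` on the
elliptic curve `E = ℂ/(ℤ + τℤ)`:  `∂_z̄ = (1/(2i·Im τ))(−∂_{y¹} + τ ∂_{y²})`. -/
noncomputable def dbar (τ : ℂ) (f : ℝ × ℝ → ℂ) (y : ℝ × ℝ) : ℂ :=
  (1 / (2 * Complex.I * (τ.im : ℂ))) * (-(pdy1 f y) + τ * pdy2 f y)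

/-- The operator `∂̄_{A₀}` on endomorphisms of `E₀ = L_{q₁} ⊕ ⋯ ⊕ L_{q_n}`, where
`A₀` is the flat diagonal Chern connection with `∂̄_{A₀} = ∂̄ − (π/Im τ)[Q, ·] dz̄`
and `Q = diag(q̃₁, …, q̃_n)` the diagonal matrix of lifts. -/
noncomputable def dbarA (n : ℕ) (τ : ℂ) (Q : Fin n → ℂ)
    (s : ℝ × ℝ → Matrix (Fin n) (Fin n) ℂ) (y : ℝ × ℝ) :
    Matrix (Fin n) (Fin n) ℂ :=
  Matrix.of fun k l =>
    dbar τ (fun y => s y k l) y - ((Real.pi : ℂ) / (τ.im : ℂ)) * (Q k - Q l) * s y k l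

/-- The squared `L²(E, H₀, g₀)` norm of a matrix-valued field, integrating over
the fundamental domain `[0,1]²` of the torus. -/
noncomputable def l2sq (n : ℕ) (s : ℝ × ℝ → Matrix (Fin n) (Fin n) ℂ) : ℝ :=
  ∫ y in (Set.Icc (0:ℝ) 1 ×ˢ Set.Icc (0:ℝ) 1), ∑ k, ∑ l, Complex.normSq (s y k l)


noncomputable section

local instance instMSCircle : MeasureSpace UnitAddCircle := ⟨AddCircle.haarAddCircle⟩

local instance instHaarCircle : Measure.IsAddHaarMeasure (volume : Measure UnitAddCircle) :=
  inferInstanceAs (Measure.IsAddHaarMeasure AddCircle.haarAddCircle)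

local instance instProbCircle : IsProbabilityMeasure (volume : Measure UnitAddCircle) :=
  inferInstanceAs (IsProbabilityMeasure AddCircle.haarAddCircle)

abbrev SQ : Set (ℝ × ℝ) := Set.Icc (0:ℝ) 1 ×ˢ Set.Icc (0:ℝ) 1

abbrev SQo : Set (ℝ × ℝ) := Set.Ioc (0:ℝ) 1 ×ˢ Set.Ioc (0:ℝ) 1

lemma sq_ae : (SQ : Set (ℝ × ℝ)) =ᵐ[volume] SQo := by
  have h : (Set.Icc (0:ℝ) 1) =ᵐ[volume] Set.Ioc (0:ℝ) 1 := Ioc_ae_eq_Icc.symm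
  exact Measure.set_prod_ae_eq h h

lemma torus_integral {E : Type*} [NormedAddCommGroup E] [NormedSpace ℝ E]
    (H : UnitAddTorus (Fin 2) → E) :
    ∫ x, H x = ∫ y in SQo, H ![(y.1 : UnitAddCircle), (y.2 : UnitAddCircle)] := by
  have h1 := UnitAddTorus.integral_preimage H (fun _ => (0:ℝ))
  rw [show (∫ x, H x) = _ from h1]
  have h2 := (volume_preserving_finTwoArrow ℝ).setIntegral_preimage_emb
    (MeasurableEquiv.measurableEmbedding _)
    (fun y : ℝ × ℝ => H ![(y.1 : UnitAddCircle), (y.2 : UnitAddCircle)]) SQo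
  rw [← h2]
  have hs : {x : Fin 2 → ℝ | ∀ i, x i ∈ Set.Ioc (0:ℝ) (0 + 1)} =
      (MeasurableEquiv.finTwoArrow : (Fin 2 → ℝ) ≃ᵐ ℝ × ℝ) ⁻¹' SQo := by
    ext x
    simp [Fin.forall_fin_two]
  rw [hs]
  congr 1
  ext x
  congr 1
  ext i
  fin_cases i <;> simp

def fchar (m : Fin 2 → ℤ) (y : ℝ × ℝ) : ℂ :=
  Complex.exp (-(2 * Real.pi * Complex.I * (m 0 * y.1 + m 1 * y.2)))

def fco (f : ℝ × ℝ → ℂ) (m : Fin 2 → ℤ) : ℂ := ∫ y in SQ, fchar m y * f y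

lemma mF_eq (m : Fin 2 → ℤ) (y : ℝ × ℝ) :
    UnitAddTorus.mFourier (-m) ![(y.1 : UnitAddCircle), (y.2 : UnitAddCircle)] = fchar m y := by
  simp only [UnitAddTorus.mFourier, ContinuousMap.coe_mk, Fin.prod_univ_two, fchar,
    Matrix.cons_val_zero, Matrix.cons_val_one]
  rw [fourier_coe_apply, fourier_coe_apply, ← Complex.exp_add]
  congr 1
  push_cast [Pi.neg_apply]
  ring

def lift (f : ℝ × ℝ → ℂ) (x : UnitAddTorus (Fin 2)) : ℂ :=
  f ((AddCircle.equivIoc 1 0 (x 0)).1, (AddCircle.equivIoc 1 0 (x 1)).1)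

lemma equivIoc_mk (t : ℝ) (ht : t ∈ Set.Ioc (0:ℝ) 1) :
    (AddCircle.equivIoc (1:ℝ) 0 (t : UnitAddCircle)).1 = t := by
  have := AddCircle.equivIoc_coe_eq (p := (1:ℝ)) (a := 0) (x := t) (by simpa using ht)
  rw [show AddCircle.equivIoc (1:ℝ) 0 (t : UnitAddCircle) = _ from this]

lemma lift_eq (f : ℝ × ℝ → ℂ) (y : ℝ × ℝ) (hy : y ∈ SQo) :
    lift f ![(y.1 : UnitAddCircle), (y.2 : UnitAddCircle)] = f y := by
  simp only [lift, Matrix.cons_val_zero, Matrix.cons_val_one]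
  rw [equivIoc_mk _ hy.1, equivIoc_mk _ hy.2]

lemma lift_memLp (f : ℝ × ℝ → ℂ) (hf : Continuous f) : MemLp (lift f) 2 volume := by
  have hm : Measurable (lift f) := by
    have h : Measurable fun x : UnitAddCircle => (AddCircle.equivIoc (1:ℝ) 0 x).1 :=
      measurable_subtype_coe.comp (AddCircle.measurableEquivIoc 1 0).measurable
    exact hf.measurable.comp ((h.comp (measurable_pi_apply 0)).prodMk
      (h.comp (measurable_pi_apply 1)))
  obtain ⟨C, hC⟩ := (isCompact_Icc.prod isCompact_Icc : IsCompact SQ).exists_bound_of_continuousOn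
    hf.continuousOn
  refine MemLp.of_bound hm.aestronglyMeasurable C (Filter.Eventually.of_forall fun x => ?_)
  apply hC
  have h0 := (AddCircle.equivIoc (1:ℝ) 0 (x 0)).2
  have h1 := (AddCircle.equivIoc (1:ℝ) 0 (x 1)).2
  simp only [Set.mem_Ioc, zero_add] at h0 h1
  exact ⟨⟨h0.1.le, h0.2⟩, ⟨h1.1.le, h1.2⟩⟩

lemma parseval (f : ℝ × ℝ → ℂ) (hf : Continuous f) :
    HasSum (fun m => ‖fco f m‖ ^ 2) (∫ y in SQ, ‖f y‖ ^ 2) := by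
  have hL := lift_memLp f hf
  have h := UnitAddTorus.hasSum_sq_mFourierCoeff (hL.toLp _)
  have hae := hL.coeFn_toLp
  have hmeas : MeasurableSet SQo := measurableSet_Ioc.prod measurableSet_Ioc
  convert! h using 1
  · ext m
    congr 2
    have : UnitAddTorus.mFourierCoeff (hL.toLp _) m
        = ∫ t, UnitAddTorus.mFourier (-m) t • lift f t := by
      refine integral_congr_ae ?_
      filter_upwards [hae] with t ht
      rw [ht]
    rw [show UnitAddTorus.mFourierCoeff (hL.toLp _) m = _ from this, torus_integral, fco,
      setIntegral_congr_set sq_ae]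
    refine setIntegral_congr_fun hmeas fun y hy => ?_
    simp only [mF_eq, lift_eq f y hy, smul_eq_mul]
  · have : ∫ t, ‖hL.toLp _ t‖ ^ 2 = ∫ t, ‖lift f t‖ ^ 2 := by
      refine integral_congr_ae ?_
      filter_upwards [hae] with t ht
      rw [ht]
    refine Eq.trans ?_ this.symm
    rw [torus_integral, setIntegral_congr_set sq_ae]
    refine setIntegral_congr_fun hmeas fun y hy => ?_
    simp only [lift_eq f y hy]


lemma lattice_bound (τ : ℂ) (hτ : 0 < τ.im) (w : ℂ) :
    ∃ δ : ℝ, 0 < δ ∧ ∀ m m' : ℤ, (m : ℂ) + m' * τ ≠ w → δ ≤ ‖(m : ℂ) + m' * τ - w‖ := by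
  obtain ⟨N', hN'⟩ := exists_nat_ge ((1 + |w.im|) / τ.im)
  obtain ⟨N, hN⟩ := exists_nat_ge (1 + |w.re| + N' * |τ.re|)
  have hfin : (Set.Icc (-(N:ℤ)) N ×ˢ Set.Icc (-(N':ℤ)) N').Finite :=
    (Set.finite_Icc _ _).prod (Set.finite_Icc _ _)
  have hev : ∀ᶠ δ : ℝ in nhdsWithin 0 (Set.Ioi 0),
      ∀ p ∈ (Set.Icc (-(N:ℤ)) N ×ˢ Set.Icc (-(N':ℤ)) N'),
        ((p.1 : ℂ) + p.2 * τ ≠ w → δ ≤ ‖(p.1 : ℂ) + p.2 * τ - w‖) := by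
    rw [Filter.eventually_all_finite hfin]
    intro p _
    by_cases h : (p.1 : ℂ) + p.2 * τ = w
    · exact Filter.Eventually.of_forall fun _ h' => absurd h h'
    · have : 0 < ‖(p.1 : ℂ) + p.2 * τ - w‖ := norm_pos_iff.2 (sub_ne_zero.2 h)
      filter_upwards [nhdsWithin_le_nhds (Iic_mem_nhds this)] with δ hδ _ using hδ
  obtain ⟨δ, h1, h2⟩ := (hev.and self_mem_nhdsWithin).exists
  have h2 : 0 < δ := h2
  refine ⟨min δ 1, by positivity, fun m m' hne => ?_⟩
  by_contra! hlt
  have hlt1 : ‖(m : ℂ) + m' * τ - w‖ < 1 := hlt.trans_le (min_le_right _ _)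
  have hlt2 : ‖(m : ℂ) + m' * τ - w‖ < δ := hlt.trans_le (min_le_left _ _)
  have him := (Complex.abs_im_le_norm ((m : ℂ) + m' * τ - w)).trans_lt hlt1
  have hre := (Complex.abs_re_le_norm ((m : ℂ) + m' * τ - w)).trans_lt hlt1
  simp at him hre
  have hm' : |(m':ℝ)| ≤ N' := by
    refine le_trans ?_ hN'
    rw [le_div_iff₀ hτ]
    have : |(m':ℝ)| * τ.im = |(m':ℝ) * τ.im| := by rw [abs_mul, abs_of_pos hτ]
    rw [this]
    have := abs_sub_abs_le_abs_sub ((m':ℝ) * τ.im) w.im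
    linarith
  have hm : |(m:ℝ)| ≤ N := by
    refine le_trans ?_ hN
    have e1 : |(m':ℝ) * τ.re| ≤ N' * |τ.re| := by
      rw [abs_mul]; gcongr
    have e2 : (m:ℝ) = (m + m' * τ.re - w.re) + w.re - m' * τ.re := by ring
    rw [e2]
    have e3 := abs_sub ((m + m' * τ.re - w.re) + w.re) (m' * τ.re)
    have e4 := abs_add_le (m + m' * τ.re - w.re) w.re
    linarith
  rw [abs_le] at hm hm'
  have := h1 (m, m') ⟨⟨by exact_mod_cast hm.1, by exact_mod_cast hm.2⟩,
    ⟨by exact_mod_cast hm'.1, by exact_mod_cast hm'.2⟩⟩ hne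
  simp only at this
  linarith

lemma sq_zero1 (G : ℝ × ℝ → ℂ) (hG : Continuous G) (h : ∀ x, ∫ t in (0:ℝ)..1, G (t, x) = 0) :
    ∫ y in SQ, G y = 0 := by
  rw [Measure.volume_eq_prod, ← setIntegral_prod_swap, setIntegral_prod]
  · refine integral_eq_zero_of_ae (Filter.Eventually.of_forall fun x => ?_)
    have := h x
    rw [intervalIntegral.integral_of_le zero_le_one, ← integral_Icc_eq_integral_Ioc] at this
    simpa using this
  · exact (hG.comp continuous_swap).continuousOn.integrableOn_compact
      (isCompact_Icc.prod isCompact_Icc)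

lemma sq_zero2 (G : ℝ × ℝ → ℂ) (hG : Continuous G) (h : ∀ x, ∫ t in (0:ℝ)..1, G (x, t) = 0) :
    ∫ y in SQ, G y = 0 := by
  rw [Measure.volume_eq_prod, setIntegral_prod]
  · refine integral_eq_zero_of_ae (Filter.Eventually.of_forall fun x => ?_)
    have := h x
    rw [intervalIntegral.integral_of_le zero_le_one, ← integral_Icc_eq_integral_Ioc] at this
    simpa using this
  · exact hG.continuousOn.integrableOn_compact (isCompact_Icc.prod isCompact_Icc)

lemma hasDeriv1 (f : ℝ × ℝ → ℂ) (hf : ContDiff ℝ 1 f) (y : ℝ × ℝ) :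
    HasDerivAt (fun t => f (t, y.2)) (fderiv ℝ f y (1, 0)) y.1 := by
  have h1 : HasFDerivAt f (fderiv ℝ f y) ((fun t : ℝ => (t, y.2)) y.1) :=
    (hf.differentiable (by simp) y).hasFDerivAt
  exact h1.comp_hasDerivAt y.1 ((hasDerivAt_id _).prodMk (hasDerivAt_const _ _))

lemma hasDeriv2 (f : ℝ × ℝ → ℂ) (hf : ContDiff ℝ 1 f) (y : ℝ × ℝ) :
    HasDerivAt (fun t => f (y.1, t)) (fderiv ℝ f y (0, 1)) y.2 := by
  have h1 : HasFDerivAt f (fderiv ℝ f y) ((fun t : ℝ => (y.1, t)) y.2) :=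
    (hf.differentiable (by simp) y).hasFDerivAt
  exact h1.comp_hasDerivAt y.2 ((hasDerivAt_const _ _).prodMk (hasDerivAt_id _))

lemma pdy1_eq (f : ℝ × ℝ → ℂ) (hf : ContDiff ℝ 1 f) : pdy1 f = fun y => fderiv ℝ f y (1, 0) :=
  funext fun y => (hasDeriv1 f hf y).deriv

lemma pdy2_eq (f : ℝ × ℝ → ℂ) (hf : ContDiff ℝ 1 f) : pdy2 f = fun y => fderiv ℝ f y (0, 1) :=
  funext fun y => (hasDeriv2 f hf y).deriv

lemma pdy1_cont (f : ℝ × ℝ → ℂ) (hf : ContDiff ℝ 1 f) : Continuous (pdy1 f) := by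
  rw [pdy1_eq f hf]
  exact (hf.continuous_fderiv (by simp)).clm_apply continuous_const

lemma pdy2_cont (f : ℝ × ℝ → ℂ) (hf : ContDiff ℝ 1 f) : Continuous (pdy2 f) := by
  rw [pdy2_eq f hf]
  exact (hf.continuous_fderiv (by simp)).clm_apply continuous_const

lemma fchar_cont (m : Fin 2 → ℤ) : Continuous (fchar m) := by
  unfold fchar
  fun_prop

lemma fchar_int (m : Fin 2 → ℤ) (f : ℝ × ℝ → ℂ) (hf : Continuous f) :
    IntegrableOn (fun y => fchar m y * f y) SQ :=
  ((fchar_cont m).mul hf).continuousOn.integrableOn_compact (isCompact_Icc.prod isCompact_Icc)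

lemma fchar_per1 (m : Fin 2 → ℤ) (x : ℝ) : fchar m (1, x) = fchar m (0, x) := by
  unfold fchar
  rw [Complex.exp_eq_exp_iff_exists_int]
  exact ⟨-m 0, by push_cast; ring⟩

lemma fchar_per2 (m : Fin 2 → ℤ) (x : ℝ) : fchar m (x, 1) = fchar m (x, 0) := by
  unfold fchar
  rw [Complex.exp_eq_exp_iff_exists_int]
  exact ⟨-m 1, by push_cast; ring⟩

lemma fchar_deriv1 (m : Fin 2 → ℤ) (y : ℝ × ℝ) :
    HasDerivAt (fun t => fchar m (t, y.2)) (-(2 * Real.pi * Complex.I * m 0) * fchar m y) y.1 := by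
  unfold fchar
  have h0 : HasDerivAt (fun t : ℝ => (t : ℂ)) 1 y.1 := Complex.ofRealCLM.hasDerivAt
  have := ((((h0.const_mul (m 0 : ℂ)).add_const ((m 1 : ℂ) * y.2)).const_mul
    (2 * Real.pi * Complex.I)).neg).cexp
  convert! this using 1
  simp only [Pi.neg_apply]
  ring

lemma fchar_deriv2 (m : Fin 2 → ℤ) (y : ℝ × ℝ) :
    HasDerivAt (fun t => fchar m (y.1, t)) (-(2 * Real.pi * Complex.I * m 1) * fchar m y) y.2 := by
  unfold fchar
  have h0 : HasDerivAt (fun t : ℝ => (t : ℂ)) 1 y.2 := Complex.ofRealCLM.hasDerivAt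
  have := ((((h0.const_mul (m 1 : ℂ)).const_add ((m 0 : ℂ) * y.1)).const_mul
    (2 * Real.pi * Complex.I)).neg).cexp
  convert! this using 1
  simp only [Pi.neg_apply]
  ring

lemma fco_pdy1 (f : ℝ × ℝ → ℂ) (hf : ContDiff ℝ 1 f) (hp : ∀ y : ℝ × ℝ, f (y.1 + 1, y.2) = f y)
    (m : Fin 2 → ℤ) : fco (pdy1 f) m = 2 * Real.pi * Complex.I * m 0 * fco f m := by
  have hc := pdy1_cont f hf
  have key : ∫ y in SQ, (fchar m y * pdy1 f y
      - 2 * Real.pi * Complex.I * m 0 * (fchar m y * f y)) = 0 := by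
    have hcont : Continuous fun y => fchar m y * pdy1 f y
      - 2 * Real.pi * Complex.I * m 0 * (fchar m y * f y) :=
      ((fchar_cont m).mul hc).sub (continuous_const.mul ((fchar_cont m).mul hf.continuous))
    refine sq_zero1 _ hcont fun x => ?_
    rw [intervalIntegral.integral_eq_sub_of_hasDerivAt (f := fun t => fchar m (t, x) * f (t, x))]
    · have := hp (0, x)
      simp only [zero_add] at this
      rw [fchar_per1, this, sub_self]
    · intro t _
      have := (fchar_deriv1 m (t, x)).mul (hasDeriv1 f hf (t, x))
      rw [pdy1_eq f hf]
      convert! this using 1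
      ring
    · exact (hcont.comp (Continuous.prodMk_left x)).intervalIntegrable _ _
  rw [integral_sub (fchar_int m _ hc) ((fchar_int m _ hf.continuous).const_mul _),
    integral_const_mul] at key
  exact sub_eq_zero.1 key

lemma fco_pdy2 (f : ℝ × ℝ → ℂ) (hf : ContDiff ℝ 1 f) (hp : ∀ y : ℝ × ℝ, f (y.1, y.2 + 1) = f y)
    (m : Fin 2 → ℤ) : fco (pdy2 f) m = 2 * Real.pi * Complex.I * m 1 * fco f m := by
  have hc := pdy2_cont f hf
  have key : ∫ y in SQ, (fchar m y * pdy2 f y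
      - 2 * Real.pi * Complex.I * m 1 * (fchar m y * f y)) = 0 := by
    have hcont : Continuous fun y => fchar m y * pdy2 f y
      - 2 * Real.pi * Complex.I * m 1 * (fchar m y * f y) :=
      ((fchar_cont m).mul hc).sub (continuous_const.mul ((fchar_cont m).mul hf.continuous))
    refine sq_zero2 _ hcont fun x => ?_
    rw [intervalIntegral.integral_eq_sub_of_hasDerivAt (f := fun t => fchar m (x, t) * f (x, t))]
    · have := hp (x, 0)
      simp only [zero_add] at this
      rw [fchar_per2, this, sub_self]
    · intro t _
      have := (fchar_deriv2 m (x, t)).mul (hasDeriv2 f hf (x, t))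
      rw [pdy2_eq f hf]
      convert! this using 1
      ring
    · exact (hcont.comp (Continuous.prodMk_right x)).intervalIntegrable _ _
  rw [integral_sub (fchar_int m _ hc) ((fchar_int m _ hf.continuous).const_mul _),
    integral_const_mul] at key
  exact sub_eq_zero.1 key

lemma dbarw_cont (τ w : ℂ) (f : ℝ × ℝ → ℂ) (hf : ContDiff ℝ 1 f) :
    Continuous fun y => dbar τ f y - ((Real.pi : ℂ) / (τ.im : ℂ)) * w * f y := by
  unfold dbar
  exact (continuous_const.mul ((pdy1_cont f hf).neg.add
    (continuous_const.mul (pdy2_cont f hf)))).sub (continuous_const.mul hf.continuous)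

lemma fco_dbar (τ : ℂ) (hτ : 0 < τ.im) (w : ℂ) (f : ℝ × ℝ → ℂ) (hf : ContDiff ℝ 1 f)
    (hp1 : ∀ y : ℝ × ℝ, f (y.1 + 1, y.2) = f y) (hp2 : ∀ y : ℝ × ℝ, f (y.1, y.2 + 1) = f y)
    (m : Fin 2 → ℤ) :
    fco (fun y => dbar τ f y - ((Real.pi : ℂ) / (τ.im : ℂ)) * w * f y) m =
      ((Real.pi : ℂ) / (τ.im : ℂ)) * (((-m 0 : ℤ) : ℂ) + (m 1 : ℤ) * τ - w) * fco f m := by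
  have h1 := fco_pdy1 f hf hp1 m
  have h2 := fco_pdy2 f hf hp2 m
  have hne : (τ.im : ℂ) ≠ 0 := by exact_mod_cast hτ.ne'
  set a : ℂ := 1 / (2 * Complex.I * (τ.im : ℂ)) with ha
  set b : ℂ := (Real.pi : ℂ) / (τ.im : ℂ) * w with hb
  have i1 := (fchar_int m _ (pdy1_cont f hf)).const_mul (-a)
  have i2 := (fchar_int m _ (pdy2_cont f hf)).const_mul (a * τ)
  have i3 := (fchar_int m _ hf.continuous).const_mul b
  have e : fco (fun y => dbar τ f y - b * f y) m =
      -a * fco (pdy1 f) m + a * τ * fco (pdy2 f) m - b * fco f m := by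
    unfold fco
    rw [← integral_const_mul, ← integral_const_mul, ← integral_const_mul, ← integral_add i1 i2,
      ← integral_sub (show Integrable (fun x => -a * (fchar m x * pdy1 f x) +
        a * τ * (fchar m x * pdy2 f x)) (volume.restrict SQ) from i1.add i2) i3]
    congr 1
    ext y
    simp only [dbar, ← ha]
    ring
  rw [e, h1, h2, ha, hb]
  push_cast
  field_simp

lemma entry_bound (τ : ℂ) (hτ : 0 < τ.im) (w : ℂ) :
    ∃ C : ℝ, 0 < C ∧ ∀ f : ℝ × ℝ → ℂ, ContDiff ℝ 1 f →
      (∀ y : ℝ × ℝ, f (y.1 + 1, y.2) = f y) → (∀ y : ℝ × ℝ, f (y.1, y.2 + 1) = f y) →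
      (∀ m : Fin 2 → ℤ, ((-m 0 : ℤ) : ℂ) + (m 1 : ℤ) * τ = w → fco f m = 0) →
      ∫ y in SQ, ‖f y‖ ^ 2 ≤
        C * ∫ y in SQ, ‖dbar τ f y - ((Real.pi : ℂ) / (τ.im : ℂ)) * w * f y‖ ^ 2 := by
  obtain ⟨δ, hδ, hb⟩ := lattice_bound τ hτ w
  have hpi := Real.pi_pos
  set c := Real.pi / τ.im * δ with hc
  have hcpos : 0 < c := by positivity
  refine ⟨(c ^ 2)⁻¹, by positivity, fun f hf hp1 hp2 h0 => ?_⟩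
  have s1 := parseval f hf.continuous
  have s2 := (parseval _ (dbarw_cont τ w f hf)).mul_left ((c ^ 2)⁻¹)
  refine hasSum_le (fun m => ?_) s1 s2
  rw [fco_dbar τ hτ w f hf hp1 hp2 m]
  by_cases h : ((-m 0 : ℤ) : ℂ) + (m 1 : ℤ) * τ = w
  · rw [h0 m h]; simp
  · have := hb _ _ h
    rw [le_inv_mul_iff₀ (by positivity), ← mul_pow]
    have hn : ‖((Real.pi : ℂ) / (τ.im : ℂ))‖ = Real.pi / τ.im := by
      rw [norm_div, Complex.norm_real, Complex.norm_real, Real.norm_of_nonneg hpi.le,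
        Real.norm_of_nonneg hτ.le]
    rw [norm_mul, norm_mul, hn, hc]
    gcongr

lemma l2sq_eq (n : ℕ) (s : ℝ × ℝ → Matrix (Fin n) (Fin n) ℂ)
    (hs : ∀ k l, Continuous fun y => s y k l) :
    l2sq n s = ∑ k, ∑ l, ∫ y in SQ, ‖s y k l‖ ^ 2 := by
  have hi : ∀ k l, IntegrableOn (fun y => ‖s y k l‖ ^ 2) SQ := fun k l =>
    ((hs k l).norm.pow 2).continuousOn.integrableOn_compact (isCompact_Icc.prod isCompact_Icc)
  unfold l2sq
  simp only [Complex.normSq_eq_norm_sq]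
  rw [integral_finsetSum _ fun k _ => integrable_finsetSum _ fun l _ => hi k l]
  refine Finset.sum_congr rfl fun k _ => ?_
  rw [integral_finsetSum _ fun l _ => hi k l]

end

/-- Poincaré inequality.  Let `E = ℂ/(ℤ + τℤ)` (flat metric `g₀`,
`Im τ > 0`) and `E₀ = L_{q₁} ⊕ ⋯ ⊕ L_{q_n}` with the points `q_i` pairwise
distinct in `E` (their lifts `Q k` differ by no lattice point), equipped with the
flat diagonal Chern connection `A₀` and the trivial Hermitian metric `H₀`.  Then
there is `C_p > 0` such that for every trace-free Hermitian endomorphism `s`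
(smooth and doubly periodic) whose diagonal entries have zero average over `E`,
`‖s‖_{L²(E)} ≤ C_p ‖∂̄_{A₀} s‖_{L²(E)}`. -/
theorem stmt14 (n : ℕ) (τ : ℂ) (hτ : 0 < τ.im) (Q : Fin n → ℂ)
    (hdist : ∀ k l, k ≠ l → ∀ m m' : ℤ, Q k - Q l ≠ (m : ℂ) + (m' : ℂ) * τ) :
    ∃ Cp : ℝ, 0 < Cp ∧
      ∀ s : ℝ × ℝ → Matrix (Fin n) (Fin n) ℂ,
        (∀ k l, ContDiff ℝ (⊤ : ℕ∞) (fun y => s y k l)) →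
        (∀ y : ℝ × ℝ, s (y.1 + 1, y.2) = s y) →
        (∀ y : ℝ × ℝ, s (y.1, y.2 + 1) = s y) →
        (∀ y, (s y)ᴴ = s y) →
        (∀ y, Matrix.trace (s y) = 0) →
        (∀ k, (∫ y in (Set.Icc (0:ℝ) 1 ×ˢ Set.Icc (0:ℝ) 1), s y k k) = 0) →
        Real.sqrt (l2sq n s) ≤ Cp * Real.sqrt (l2sq n (dbarA n τ Q s)) := by
  choose C hC0 hC using fun k l => entry_bound τ hτ (Q k - Q l)
  have hT0 : ∀ k l, 0 ≤ C k l := fun k l => (hC0 k l).le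
  set T : ℝ := 1 + ∑ k, ∑ l, C k l with hT
  have hTpos : 0 < T := by
    have : 0 ≤ ∑ k, ∑ l, C k l :=
      Finset.sum_nonneg fun k _ => Finset.sum_nonneg fun l _ => hT0 k l
    linarith
  have hCT : ∀ k l, C k l ≤ T := fun k l => by
    have h1 : C k l ≤ ∑ l, C k l :=
      Finset.single_le_sum (f := fun l => C k l) (fun l _ => hT0 k l) (Finset.mem_univ l)
    have h2 : ∑ l, C k l ≤ ∑ k, ∑ l, C k l :=
      Finset.single_le_sum (f := fun k => ∑ l, C k l)
        (fun k _ => Finset.sum_nonneg fun l _ => hT0 k l) (Finset.mem_univ k)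
    linarith
  refine ⟨Real.sqrt T, Real.sqrt_pos.2 hTpos, fun s hs hp1 hp2 _ _ hav => ?_⟩
  have hs1 : ∀ k l, ContDiff ℝ 1 (fun y => s y k l) := fun k l => (hs k l).of_le (by exact_mod_cast le_top)
  rw [← Real.sqrt_mul hTpos.le]
  apply Real.sqrt_le_sqrt
  rw [l2sq_eq n s fun k l => (hs k l).continuous,
    l2sq_eq n (dbarA n τ Q s) fun k l => dbarw_cont τ (Q k - Q l) _ (hs1 k l), Finset.mul_sum]
  refine Finset.sum_le_sum fun k _ => ?_
  rw [Finset.mul_sum]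
  refine Finset.sum_le_sum fun l _ => ?_
  refine (hC k l (fun y => s y k l) (hs1 k l) (fun y => by simp only [hp1])
    (fun y => by simp only [hp2]) fun m hm => ?_).trans ?_
  · by_cases hkl : k = l
    · subst hkl
      rw [sub_self] at hm
      have him := congrArg Complex.im hm
      simp [hτ.ne'] at him
      have hre := congrArg Complex.re hm
      simp [him] at hre
      have := hav k
      simpa [fco, fchar, him, hre] using this
    · exact absurd hm.symm (hdist k l hkl _ _)
  · exact mul_le_mul_of_nonneg_right (hCT k l) (integral_nonneg fun y => by positivity)
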